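/- Fix ω0 ∈ ℝ, σ0² > 0, σH² > 0, and h ∈ (0,1). For r ∈ (0,∞), define D_r(ω) := ∫_{ω0−r}^{ω0+r} f(t|ω) dt, the censored posterior mean a*(s,r) := (∫ ω·f(s|ω)·φ(ω; ω0, σ0²)/D_r(ω) dω) / (∫ f(s|ω)·φ(ω; ω0, σ0²)/D_r(ω) dω), and the expected quadratic loss of censoring to radius r, L(r) := ∫ ( ∫_{ω0−r}^{ω0+r} (ω − a*(s,r))²·(f(s|ω)/D_r(ω)) ds )·φ(ω; ω0, σ0²) dω. Define the uncensored posterior mean a*(s,∞) := (∫ ω·f(s|ω)·φ(ω; ω0, σ0²) dω) / (∫ f(s|ω)·φ(ω; ω0, σ0²) dω) and the uncensored expected loss L(∞) := ∫∫ (ω − a*(s,∞))²·f(s|ω)·φ(ω; ω0, σ0²) ds dω. Then there exists a threshold ν* > σH² such that whenever σL² ≥ ν*, there exists a finite radius r ∈ (0,∞) with L(r) < L(∞). -/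

import Mathlib

open MeasureTheory Real Filter

/-- The Gaussian density with mean `m` and variance `v`. -/
noncomputable def gauss (x m v : ℝ) : ℝ :=
  (Real.sqrt (2 * Real.pi * v))⁻¹ * Real.exp (-(x - m) ^ 2 / (2 * v))

/-- The mixture signal density `f(s|ω) = h·φ(s;ω,vH) + (1−h)·φ(s;ω,vL)`. -/
noncomputable def mixDens (h vH vL s ω : ℝ) : ℝ :=
  h * gauss s ω vH + (1 - h) * gauss s ω vL

/-- `D_r(ω)`: the probability of the window `[ω0−r, ω0+r]` under the mixture density. -/
noncomputable def winProb (h vH vL ω0 r ω : ℝ) : ℝ :=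
  ∫ t in Set.Icc (ω0 - r) (ω0 + r), mixDens h vH vL t ω

/-- The censored posterior-mean action `a*(s,r)`. -/
noncomputable def aCens (h vH vL ω0 v0 r s : ℝ) : ℝ :=
  (∫ ω : ℝ, ω * (mixDens h vH vL s ω * gauss ω ω0 v0 / winProb h vH vL ω0 r ω)) /
    (∫ ω : ℝ, mixDens h vH vL s ω * gauss ω ω0 v0 / winProb h vH vL ω0 r ω)

/-- `L(r)`: the expected quadratic loss of censoring to radius `r`. -/
noncomputable def lossCens (h vH vL ω0 v0 r : ℝ) : ℝ :=
  ∫ ω : ℝ,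
    (∫ s in Set.Icc (ω0 - r) (ω0 + r),
        (ω - aCens h vH vL ω0 v0 r s) ^ 2 * (mixDens h vH vL s ω / winProb h vH vL ω0 r ω)) *
      gauss ω ω0 v0

/-- The uncensored posterior-mean action `a*(s,∞)`. -/
noncomputable def aUncens (h vH vL ω0 v0 s : ℝ) : ℝ :=
  (∫ ω : ℝ, ω * (mixDens h vH vL s ω * gauss ω ω0 v0)) /
    (∫ ω : ℝ, mixDens h vH vL s ω * gauss ω ω0 v0)

/-- `L(∞)`: the expected quadratic loss without censoring. -/
noncomputable def lossUncens (h vH vL ω0 v0 : ℝ) : ℝ :=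
  ∫ ω : ℝ,
    (∫ s : ℝ, (ω - aUncens h vH vL ω0 v0 s) ^ 2 * mixDens h vH vL s ω) * gauss ω ω0 v0

/-
Write `V(v) = v * v0 / (v + v0)` for the posterior variance after one signal of noise variance `v`.
Knowing the type of the source can only help, so `L(∞) ≥ h * V(vH) + (1 - h) * V(vL)`, which for
`vL ≥ vH + 1` exceeds `V(vH)` by a fixed amount. Censoring, on the other hand, gets arbitrarily
close to `V(vH)`. The censored posterior mean does at least as well as the linear rule that would be
optimal if all sources were of high quality, and for this rule the loss is estimated state by
state. A state within `r / 2` of the prior mean keeps almost all of its high-quality signals, while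
its low-quality signals hit the window with probability `O(r / √vL)`; the remaining states
contribute `O(r⁻²)` through the fourth moment of the prior. So `L(r)` is below any number larger
than `V(vH)` once first `r` and then `vL` are chosen large.
-/

open ProbabilityTheory

section WeightedMean

variable {α : Type*} [MeasurableSpace α] {ν : Measure α} {X w : α → ℝ}

lemma integrable_sq_sub_mul (h0 : Integrable w ν) (h1 : Integrable (fun a => X a * w a) ν)
    (h2 : Integrable (fun a => X a ^ 2 * w a) ν) (c : ℝ) :
    Integrable (fun a => (X a - c) ^ 2 * w a) ν := by
  refine ((h2.sub (h1.const_mul (2 * c))).add (h0.const_mul (c ^ 2))).congr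
    (ae_of_all _ fun a => ?_)
  simp only [Pi.add_apply, Pi.sub_apply]
  ring

lemma integral_sq_sub_mul (h0 : Integrable w ν) (h1 : Integrable (fun a => X a * w a) ν)
    (h2 : Integrable (fun a => X a ^ 2 * w a) ν) (c : ℝ) :
    ∫ a, (X a - c) ^ 2 * w a ∂ν =
      ∫ a, X a ^ 2 * w a ∂ν - 2 * c * ∫ a, X a * w a ∂ν + c ^ 2 * ∫ a, w a ∂ν := by
  have h21 : Integrable (fun a => X a ^ 2 * w a - 2 * c * (X a * w a)) ν :=
    h2.sub (h1.const_mul (2 * c))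
  rw [← integral_const_mul, ← integral_const_mul, ← integral_sub h2 (h1.const_mul _),
    ← integral_add h21 (h0.const_mul _)]
  exact integral_congr_ae (ae_of_all _ fun a => by ring)

lemma integral_sq_sub_weightedMean_le (hw : 0 ≤ᵐ[ν] w) (h0 : Integrable w ν)
    (h1 : Integrable (fun a => X a * w a) ν) (h2 : Integrable (fun a => X a ^ 2 * w a) ν)
    (c : ℝ) :
    ∫ a, (X a - (∫ a, X a * w a ∂ν) / ∫ a, w a ∂ν) ^ 2 * w a ∂ν ≤
      ∫ a, (X a - c) ^ 2 * w a ∂ν := by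
  rcases (integral_nonneg_of_ae hw).eq_or_lt with hzero | hpos
  · have hw0 : w =ᵐ[ν] 0 := (integral_eq_zero_iff_of_nonneg_ae hw h0).1 hzero.symm
    refine (integral_congr_ae ?_).le
    filter_upwards [hw0] with a ha
    simp only [ha, Pi.zero_apply, mul_zero]
  · rw [integral_sq_sub_mul h0 h1 h2, integral_sq_sub_mul h0 h1 h2]
    set W := ∫ a, w a ∂ν
    set M := ∫ a, X a * w a ∂ν
    have hgap : (-2 * c * M + c ^ 2 * W) - (-2 * (M / W) * M + (M / W) ^ 2 * W) =
        W * (M / W - c) ^ 2 := by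
      field_simp
      ring
    linarith [mul_nonneg hpos.le (sq_nonneg (M / W - c))]

end WeightedMean

section Likelihood

variable {S Θ : Type*} [MeasurableSpace S] [MeasurableSpace Θ] {μ : Measure S} {P : Measure Θ}
  {ℓ : S → Θ → ℝ}

/-- `ℓ s θ` is a jointly measurable family of probability densities, with respect to `μ`, of a
signal `s` whose distribution depends on the state `θ`. -/
structure IsLikelihood (μ : Measure S) (ℓ : S → Θ → ℝ) : Prop where
  measurable : Measurable (Function.uncurry ℓ)
  nonneg : ∀ s θ, 0 ≤ ℓ s θ
  integral_eq_one : ∀ θ, ∫ s, ℓ s θ ∂μ = 1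

/-- The likelihood of a signal conditioned to fall in the window `W`. -/
noncomputable def censoredLikelihood (μ : Measure S) (W : Set S) (ℓ : S → Θ → ℝ) (s : S)
    (θ : Θ) : ℝ :=
  ℓ s θ / ∫ t in W, ℓ t θ ∂μ

namespace IsLikelihood

lemma integrable (hℓ : IsLikelihood μ ℓ) (θ : Θ) : Integrable (fun s => ℓ s θ) μ :=
  .of_integral_ne_zero (by simp only [hℓ.integral_eq_one, ne_eq, one_ne_zero, not_false_eq_true])

lemma convexComb {ℓ' : S → Θ → ℝ} {p q : ℝ} (hℓ : IsLikelihood μ ℓ) (hℓ' : IsLikelihood μ ℓ')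
    (hp : 0 ≤ p) (hq : 0 ≤ q) (hpq : p + q = 1) :
    IsLikelihood μ (fun s θ => p * ℓ s θ + q * ℓ' s θ) where
  measurable := (hℓ.measurable.const_mul p).add (hℓ'.measurable.const_mul q)
  nonneg s θ := add_nonneg (mul_nonneg hp (hℓ.nonneg s θ)) (mul_nonneg hq (hℓ'.nonneg s θ))
  integral_eq_one θ := by
    rw [integral_add ((hℓ.integrable θ).const_mul p) ((hℓ'.integrable θ).const_mul q),
      integral_const_mul, integral_const_mul, hℓ.integral_eq_one, hℓ'.integral_eq_one,
      mul_one, mul_one, hpq]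

lemma censored [SFinite μ] {W : Set S} (hℓ : IsLikelihood μ ℓ)
    (hW : ∀ θ, 0 < ∫ t in W, ℓ t θ ∂μ) :
    IsLikelihood (μ.restrict W) (censoredLikelihood μ W ℓ) where
  measurable := by
    have hD : Measurable fun θ => ∫ t in W, ℓ t θ ∂μ :=
      hℓ.measurable.stronglyMeasurable.integral_prod_left.measurable
    exact hℓ.measurable.div (hD.comp measurable_snd)
  nonneg s θ := div_nonneg (hℓ.nonneg s θ) (hW θ).le
  integral_eq_one θ := by
    simp only [censoredLikelihood]
    rw [integral_div, div_self (hW θ).ne']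

lemma integral_mul_le {g : S → ℝ} {C : ℝ} (hℓ : IsLikelihood μ ℓ) (hg : 0 ≤ g)
    (hgC : ∀ᵐ s ∂μ, g s ≤ C) (θ : Θ) : ∫ s, g s * ℓ s θ ∂μ ≤ C := by
  calc ∫ s, g s * ℓ s θ ∂μ ≤ ∫ s, C * ℓ s θ ∂μ := by
        refine integral_mono_of_nonneg (ae_of_all _ fun s => mul_nonneg (hg s) (hℓ.nonneg s θ))
          ((hℓ.integrable θ).const_mul C) ?_
        filter_upwards [hgC] with s hs
        exact mul_le_mul_of_nonneg_right hs (hℓ.nonneg s θ)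
    _ = C := by rw [integral_const_mul, hℓ.integral_eq_one, mul_one]

lemma integrable_mul [SFinite μ] {g : Θ → ℝ} (hℓ : IsLikelihood μ ℓ) (hg : Integrable g P) :
    Integrable (fun z : Θ × S => g z.1 * ℓ z.2 z.1) (P.prod μ) := by
  have hmeas : AEStronglyMeasurable (fun z : Θ × S => g z.1 * ℓ z.2 z.1) (P.prod μ) :=
    hg.aestronglyMeasurable.comp_fst.mul
      (hℓ.measurable.comp measurable_swap).aestronglyMeasurable
  refine (integrable_prod_iff hmeas).2 ⟨ae_of_all _ fun θ => (hℓ.integrable θ).const_mul (g θ), ?_⟩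
  refine hg.norm.congr (ae_of_all _ fun θ => ?_)
  simp only [norm_mul, Real.norm_of_nonneg (hℓ.nonneg _ θ)]
  rw [integral_const_mul, hℓ.integral_eq_one, mul_one]

end IsLikelihood

end Likelihood

section QuadraticLoss

variable {S : Type*} [MeasurableSpace S] {μ : Measure S} {P : Measure ℝ} {ℓ : S → ℝ → ℝ}
  {δ : S → ℝ}

/-- The mean of the posterior of a real state with prior `P` after a signal `s` of likelihood
`ℓ s`. -/
noncomputable def posteriorMean (P : Measure ℝ) (ℓ : S → ℝ → ℝ) (s : S) : ℝ :=
  (∫ x, x * ℓ s x ∂P) / ∫ x, ℓ s x ∂P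

/-- The expected quadratic loss of the decision rule `δ` under the prior `P`, for a signal of
likelihood `ℓ` with respect to `μ`. -/
noncomputable def quadraticRisk (P : Measure ℝ) (μ : Measure S) (ℓ : S → ℝ → ℝ) (δ : S → ℝ) : ℝ :=
  ∫ x, ∫ s, (x - δ s) ^ 2 * ℓ s x ∂μ ∂P

/-- The quadratic loss of `δ` is integrable over states and signals, so that `quadraticRisk` is
its genuine expectation and not a junk value. -/
def HasFiniteRisk (P : Measure ℝ) (μ : Measure S) (ℓ : S → ℝ → ℝ) (δ : S → ℝ) : Prop :=
  Integrable (fun z : ℝ × S => (z.1 - δ z.2) ^ 2 * ℓ z.2 z.1) (P.prod μ)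

lemma quadraticRisk_le_integral {G : ℝ → ℝ} (hℓ : ∀ s x, 0 ≤ ℓ s x) (hG : Integrable G P)
    (hle : ∀ x, ∫ s, (x - δ s) ^ 2 * ℓ s x ∂μ ≤ G x) : quadraticRisk P μ ℓ δ ≤ ∫ x, G x ∂P :=
  integral_mono_of_nonneg
    (ae_of_all _ fun x => integral_nonneg fun s => mul_nonneg (sq_nonneg _) (hℓ s x)) hG
    (ae_of_all _ hle)

namespace HasFiniteRisk

variable [SFinite P] [SFinite μ]

lemma quadraticRisk_eq (hδ : HasFiniteRisk P μ ℓ δ) :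
    quadraticRisk P μ ℓ δ = ∫ s, ∫ x, (x - δ s) ^ 2 * ℓ s x ∂P ∂μ :=
  integral_integral_swap hδ

lemma integral_le_quadraticRisk {g : S → ℝ} (hδ : HasFiniteRisk P μ ℓ δ) (hg : Integrable g μ)
    (hle : ∀ s, g s ≤ ∫ x, (x - δ s) ^ 2 * ℓ s x ∂P) :
    ∫ s, g s ∂μ ≤ quadraticRisk P μ ℓ δ := by
  rw [hδ.quadraticRisk_eq]
  exact integral_mono hg hδ.integral_prod_right hle

end HasFiniteRisk

namespace IsLikelihood

lemma hasFiniteRisk_of_bounded [IsFiniteMeasure P] [SFinite μ] {B : ℝ} (hℓ : IsLikelihood μ ℓ)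
    (hP : MemLp id 2 P) (hδ : Measurable δ) (hB : ∀ᵐ s ∂μ, |δ s| ≤ B) :
    HasFiniteRisk P μ ℓ δ := by
  have hdom := hℓ.integrable_mul (μ := μ)
    ((hP.integrable_sq.const_mul 2).add (integrable_const (2 * B ^ 2)))
  refine hdom.mono' ?_ ?_
  · exact (((measurable_fst.sub (hδ.comp measurable_snd)).pow_const 2).mul
      (hℓ.measurable.comp measurable_swap)).aestronglyMeasurable
  · filter_upwards [Measure.quasiMeasurePreserving_snd.ae hB] with z hz
    rw [Real.norm_of_nonneg (mul_nonneg (sq_nonneg _) (hℓ.nonneg _ _))]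
    refine mul_le_mul_of_nonneg_right ?_ (hℓ.nonneg _ _)
    have hsq : δ z.2 ^ 2 ≤ B ^ 2 := sq_le_sq.2 (hz.trans (le_abs_self B))
    simp only [Pi.add_apply, id]
    linarith [sq_nonneg (z.1 + δ z.2)]

lemma measurable_posteriorMean [SFinite P] (hℓ : IsLikelihood μ ℓ) :
    Measurable (posteriorMean P ℓ) := by
  have hnum : Measurable (Function.uncurry fun s x => x * ℓ s x) :=
    measurable_snd.mul hℓ.measurable
  exact hnum.stronglyMeasurable.integral_prod_right.measurable.div
    hℓ.measurable.stronglyMeasurable.integral_prod_right.measurable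

variable [IsFiniteMeasure P] [SFinite μ]

lemma ae_integral_posteriorMean_le (hℓ : IsLikelihood μ ℓ) (hP : MemLp id 2 P) (δ : S → ℝ) :
    ∀ᵐ s ∂μ, Integrable (fun x => (x - posteriorMean P ℓ s) ^ 2 * ℓ s x) P ∧
      ∫ x, (x - posteriorMean P ℓ s) ^ 2 * ℓ s x ∂P ≤ ∫ x, (x - δ s) ^ 2 * ℓ s x ∂P := by
  have h0 := (hℓ.integrable_mul (integrable_const (1 : ℝ) (μ := P))).prod_left_ae
  have h1 := (hℓ.integrable_mul (hP.integrable one_le_two)).prod_left_ae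
  have h2 := (hℓ.integrable_mul hP.integrable_sq).prod_left_ae
  filter_upwards [h0, h1, h2] with s h0 h1 h2
  simp only [one_mul] at h0
  exact ⟨integrable_sq_sub_mul h0 h1 h2 _,
    integral_sq_sub_weightedMean_le (ae_of_all _ (hℓ.nonneg s)) h0 h1 h2 _⟩

lemma hasFiniteRisk_posteriorMean (hℓ : IsLikelihood μ ℓ) (hP : MemLp id 2 P)
    (hδ : HasFiniteRisk P μ ℓ δ) : HasFiniteRisk P μ ℓ (posteriorMean P ℓ) := by
  have hnn : ∀ (s : S) (x : ℝ), 0 ≤ (x - posteriorMean P ℓ s) ^ 2 * ℓ s x := fun s x =>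
    mul_nonneg (sq_nonneg _) (hℓ.nonneg s x)
  have hmeas : Measurable fun z : ℝ × S => (z.1 - posteriorMean P ℓ z.2) ^ 2 * ℓ z.2 z.1 :=
    ((measurable_fst.sub (hℓ.measurable_posteriorMean.comp measurable_snd)).pow_const 2).mul
      (hℓ.measurable.comp measurable_swap)
  have hopt := hℓ.ae_integral_posteriorMean_le hP δ
  refine (integrable_prod_iff' hmeas.aestronglyMeasurable).2 ⟨hopt.mono fun s hs => hs.1, ?_⟩
  simp only [Real.norm_of_nonneg (hnn _ _)]
  refine hδ.integral_prod_right.mono'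
    (hmeas.stronglyMeasurable.integral_prod_left' (μ := P)).aestronglyMeasurable ?_
  filter_upwards [hopt] with s hs
  rw [Real.norm_of_nonneg (integral_nonneg (hnn s))]
  exact hs.2

lemma quadraticRisk_posteriorMean_le (hℓ : IsLikelihood μ ℓ) (hP : MemLp id 2 P)
    (hδ : HasFiniteRisk P μ ℓ δ) :
    quadraticRisk P μ ℓ (posteriorMean P ℓ) ≤ quadraticRisk P μ ℓ δ := by
  have hpost := hℓ.hasFiniteRisk_posteriorMean hP hδ
  rw [hpost.quadraticRisk_eq, hδ.quadraticRisk_eq]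
  exact integral_mono_ae hpost.integral_prod_right hδ.integral_prod_right
    ((hℓ.ae_integral_posteriorMean_le hP δ).mono fun s hs => hs.2)

end IsLikelihood

end QuadraticLoss

section Gaussian

lemma gauss_nonneg (x m v : ℝ) : 0 ≤ gauss x m v := by
  unfold gauss
  positivity

lemma gauss_pos {v : ℝ} (hv : 0 < v) (x m : ℝ) : 0 < gauss x m v := by
  unfold gauss
  positivity

lemma gauss_le {v : ℝ} (hv : 0 ≤ v) (x m : ℝ) : gauss x m v ≤ (√(2 * π * v))⁻¹ := by
  refine mul_le_of_le_one_right (by positivity) (Real.exp_le_one_iff.2 ?_)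
  exact div_nonpos_of_nonpos_of_nonneg (neg_nonpos.2 (sq_nonneg _)) (by positivity)

lemma gauss_eq_gaussianPDFReal {v : ℝ} (hv : 0 ≤ v) (x m : ℝ) :
    gauss x m v = gaussianPDFReal m v.toNNReal x := by
  simp only [gauss, gaussianPDFReal, Real.coe_toNNReal v hv]

lemma integral_mul_gauss {v : ℝ} (hv : 0 < v) (m : ℝ) (g : ℝ → ℝ) :
    ∫ x, g x * gauss x m v = ∫ x, g x ∂gaussianReal m v.toNNReal := by
  rw [integral_gaussianReal_eq_integral_smul (Real.toNNReal_pos.2 hv).ne']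
  simp only [gauss_eq_gaussianPDFReal hv.le, smul_eq_mul, mul_comm]

lemma isLikelihood_gauss {v : ℝ} (hv : 0 < v) :
    IsLikelihood volume (fun s x : ℝ => gauss s x v) where
  measurable := by
    unfold gauss
    fun_prop
  nonneg s x := gauss_nonneg s x v
  integral_eq_one x := by
    simp only [gauss_eq_gaussianPDFReal hv.le]
    exact integral_gaussianPDFReal_eq_one x (Real.toNNReal_pos.2 hv).ne'

lemma integrable_sub_pow_gaussianReal (m : ℝ) (v : NNReal) (c : ℝ) (n : ℕ) :
    Integrable (fun x => (x - c) ^ n) (gaussianReal m v) := by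
  have hmem : MemLp (fun x : ℝ => x - c) n (gaussianReal m v) :=
    (memLp_id_gaussianReal n).sub (memLp_const c)
  refine (integrable_norm_iff (by fun_prop)).1 ?_
  simpa only [norm_pow] using hmem.integrable_norm_pow'

lemma integral_affine_sq_gaussianReal (m : ℝ) (v : NNReal) (a b : ℝ) :
    ∫ x, (a * x + b) ^ 2 ∂gaussianReal m v = a ^ 2 * v + (a * m + b) ^ 2 := by
  have hid : MemLp (fun x => x) 2 (gaussianReal m v) := memLp_id_gaussianReal 2
  have hvar : Var[fun x => a * x + b; gaussianReal m v] = a ^ 2 * v := by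
    rw [variance_add_const (by fun_prop), variance_const_mul, variance_fun_id_gaussianReal]
  have hmean : ∫ x, a * x + b ∂gaussianReal m v = a * m + b := by
    rw [integral_add ((hid.integrable one_le_two).const_mul a) (integrable_const b),
      integral_const_mul, integral_id_gaussianReal, integral_const, probReal_univ, one_smul]
  have hmem : MemLp (fun x => a * x + b) 2 (gaussianReal m v) :=
    (hid.const_mul a).add (memLp_const b)
  rw [variance_eq_sub hmem, hmean] at hvar
  simp only [Pi.pow_apply] at hvar
  linarith

lemma integral_sub_sq_gaussianReal (m : ℝ) (v : NNReal) (c : ℝ) :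
    ∫ x, (x - c) ^ 2 ∂gaussianReal m v = v + (m - c) ^ 2 := by
  simpa only [one_mul, one_pow, ← sub_eq_add_neg] using
    integral_affine_sq_gaussianReal m v 1 (-c)

lemma integrable_biquadratic_gaussianReal (m : ℝ) (v : NNReal) (a b c : ℝ) :
    Integrable (fun x => a * (x - m) ^ 2 + b + c * (x - m) ^ 4) (gaussianReal m v) :=
  (((integrable_sub_pow_gaussianReal m v m 2).const_mul a).add (integrable_const b)).add
    ((integrable_sub_pow_gaussianReal m v m 4).const_mul c)

lemma integral_biquadratic_gaussianReal (m : ℝ) (v : NNReal) (a b c : ℝ) :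
    ∫ x, a * (x - m) ^ 2 + b + c * (x - m) ^ 4 ∂gaussianReal m v =
      a * v + b + c * ∫ x, (x - m) ^ 4 ∂gaussianReal m v := by
  have h2 := (integrable_sub_pow_gaussianReal m v m 2).const_mul a
  have h4 := (integrable_sub_pow_gaussianReal m v m 4).const_mul c
  have h20 : Integrable (fun x => a * (x - m) ^ 2 + b) (gaussianReal m v) :=
    h2.add (integrable_const b)
  rw [integral_add h20 h4, integral_add h2 (integrable_const b), integral_const_mul,
    integral_const_mul, integral_sub_sq_gaussianReal, integral_const, probReal_univ, one_smul]
  ring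

lemma one_sub_le_setIntegral_gauss_Icc {v : ℝ} (hv : 0 < v) {c : ℝ} (hc : 0 < c) {m a b : ℝ}
    (ha : a ≤ m - c) (hb : m + c ≤ b) :
    1 - v / c ^ 2 ≤ ∫ t in Set.Icc a b, gauss t m v := by
  have hν : v.toNNReal ≠ 0 := (Real.toNNReal_pos.2 hv).ne'
  have hmass : ∫ t in Set.Icc a b, gauss t m v =
      (gaussianReal m v.toNNReal).real (Set.Icc a b) := by
    simp only [gauss_eq_gaussianPDFReal hv.le]
    rw [measureReal_def, gaussianReal_apply_eq_integral m hν, ENNReal.toReal_ofReal]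
    exact integral_nonneg fun t => gaussianPDFReal_nonneg _ _ _
  have htail : (gaussianReal m v.toNNReal).real {t | c ≤ |t - m|} ≤ v / c ^ 2 := by
    have hcheb := meas_ge_le_variance_div_sq (memLp_id_gaussianReal (μ := m) (v := v.toNNReal) 2) hc
    simp only [id, integral_id_gaussianReal, variance_id_gaussianReal,
      Real.coe_toNNReal v hv.le] at hcheb
    exact ENNReal.toReal_le_of_le_ofReal (by positivity) hcheb
  have hsub : (Set.Icc a b)ᶜ ⊆ {t | c ≤ |t - m|} := by
    intro t ht
    by_contra! hlt
    rw [Set.mem_ofPred_eq, not_le, abs_lt] at hlt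
    exact ht ⟨by linarith, by linarith⟩
  have hcompl := (measureReal_mono hsub).trans htail
  rw [probReal_compl_eq_one_sub measurableSet_Icc] at hcompl
  linarith

/-- The variance of the posterior for Gaussian prior and noise of variances `v` and `w`; the
expression is symmetric in the two. -/
noncomputable def gaussPosteriorVar (v w : ℝ) : ℝ := v * w / (v + w)

lemma gaussPosteriorVar_pos {v w : ℝ} (hv : 0 < v) (hw : 0 < w) : 0 < gaussPosteriorVar v w := by
  unfold gaussPosteriorVar
  positivity

lemma gaussPosteriorVar_strictMonoOn {w : ℝ} (hw : 0 < w) :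
    StrictMonoOn (fun v => gaussPosteriorVar v w) (Set.Ioi 0) := by
  intro u hu v hv huv
  rw [Set.mem_Ioi] at hu hv
  simp only [gaussPosteriorVar]
  rw [div_lt_div_iff₀ (by positivity) (by positivity)]
  nlinarith [mul_pos hw hw]

/-- `w / (v + w)` is the weight that the posterior mean puts on the signal. -/
lemma sq_mul_add_sq_mul_eq_gaussPosteriorVar {v w : ℝ} (hv : 0 < v) (hw : 0 < w) :
    (1 - w / (v + w)) ^ 2 * w + (w / (v + w)) ^ 2 * v = gaussPosteriorVar v w := by
  unfold gaussPosteriorVar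
  field_simp
  ring

lemma gauss_mul_gauss {v w : ℝ} (hv : 0 < v) (hw : 0 < w) (s x m : ℝ) :
    gauss s x v * gauss x m w =
      gauss s m (v + w) * gauss x ((w * s + v * m) / (v + w)) (gaussPosteriorVar v w) := by
  have hnorm : √(2 * π * v) * √(2 * π * w) =
      √(2 * π * (v + w)) * √(2 * π * gaussPosteriorVar v w) := by
    rw [gaussPosteriorVar, ← Real.sqrt_mul (by positivity), ← Real.sqrt_mul (by positivity)]
    congr 1
    field_simp
  have hexp : -(s - x) ^ 2 / (2 * v) + -(x - m) ^ 2 / (2 * w) =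
      -(s - m) ^ 2 / (2 * (v + w)) +
        -(x - (w * s + v * m) / (v + w)) ^ 2 / (2 * gaussPosteriorVar v w) := by
    unfold gaussPosteriorVar
    field_simp
    ring
  simp only [gauss]
  rw [mul_mul_mul_comm, mul_mul_mul_comm (√(2 * π * (v + w)))⁻¹, ← Real.exp_add,
    ← Real.exp_add, hexp, ← mul_inv, ← mul_inv, hnorm]

lemma gaussPosteriorVar_mul_le_integral {v w : ℝ} (hv : 0 < v) (hw : 0 < w) (s m a : ℝ) :
    gaussPosteriorVar v w * gauss s m (v + w) ≤
      ∫ x, (x - a) ^ 2 * gauss s x v ∂gaussianReal m w.toNNReal := by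
  set p := (w * s + v * m) / (v + w)
  have hV := gaussPosteriorVar_pos hv hw
  calc gaussPosteriorVar v w * gauss s m (v + w)
      ≤ gauss s m (v + w) * (gaussPosteriorVar v w + (p - a) ^ 2) := by
        nlinarith [mul_nonneg (gauss_nonneg s m (v + w)) (sq_nonneg (p - a))]
    _ = gauss s m (v + w) * ∫ x, (x - a) ^ 2 * gauss x p (gaussPosteriorVar v w) := by
        rw [integral_mul_gauss hV, integral_sub_sq_gaussianReal, Real.coe_toNNReal _ hV.le]
    _ = ∫ x, (x - a) ^ 2 * gauss s x v * gauss x m w := by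
        rw [← integral_const_mul]
        refine integral_congr_ae (ae_of_all _ fun x => ?_)
        simp only
        rw [mul_assoc, gauss_mul_gauss hv hw]
        ring
    _ = ∫ x, (x - a) ^ 2 * gauss s x v ∂gaussianReal m w.toNNReal := integral_mul_gauss hw m _

end Gaussian

section Mixture

variable {h vH vL : ℝ}

lemma isLikelihood_mixDens (hh0 : 0 ≤ h) (hh1 : h ≤ 1) (hvH : 0 < vH) (hvL : 0 < vL) :
    IsLikelihood volume (mixDens h vH vL) :=
  (isLikelihood_gauss hvH).convexComb (isLikelihood_gauss hvL) hh0 (sub_nonneg.2 hh1)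
    (add_sub_cancel h 1)

lemma lossUncens_eq_quadraticRisk {v0 : ℝ} (hv0 : 0 < v0) (ω0 : ℝ) :
    lossUncens h vH vL ω0 v0 = quadraticRisk (gaussianReal ω0 v0.toNNReal) volume
      (mixDens h vH vL) (posteriorMean (gaussianReal ω0 v0.toNNReal) (mixDens h vH vL)) := by
  have hmean : aUncens h vH vL ω0 v0 =
      posteriorMean (gaussianReal ω0 v0.toNNReal) (mixDens h vH vL) := by
    ext s
    simp only [aUncens, posteriorMean, ← mul_assoc, integral_mul_gauss hv0]
  rw [lossUncens, hmean, integral_mul_gauss hv0, quadraticRisk]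

lemma lossCens_eq_quadraticRisk {v0 : ℝ} (hv0 : 0 < v0) (ω0 r : ℝ) :
    lossCens h vH vL ω0 v0 r = quadraticRisk (gaussianReal ω0 v0.toNNReal)
      (volume.restrict (Set.Icc (ω0 - r) (ω0 + r)))
      (censoredLikelihood volume (Set.Icc (ω0 - r) (ω0 + r)) (mixDens h vH vL))
      (posteriorMean (gaussianReal ω0 v0.toNNReal)
        (censoredLikelihood volume (Set.Icc (ω0 - r) (ω0 + r)) (mixDens h vH vL))) := by
  have hmean : aCens h vH vL ω0 v0 r = posteriorMean (gaussianReal ω0 v0.toNNReal)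
      (censoredLikelihood volume (Set.Icc (ω0 - r) (ω0 + r)) (mixDens h vH vL)) := by
    ext s
    simp only [aCens, posteriorMean, censoredLikelihood, winProb, mul_div_right_comm, ← mul_assoc,
      integral_mul_gauss hv0]
  rw [lossCens, hmean, integral_mul_gauss hv0]
  rfl

end Mixture

section Uncensored

variable {h vH vL v0 : ℝ}

lemma convexComb_gaussPosteriorVar_mul_le_integral (hh0 : 0 ≤ h) (hh1 : h ≤ 1) (hvH : 0 < vH)
    (hvL : 0 < vL) (hv0 : 0 < v0) (s m a : ℝ) :
    h * (gaussPosteriorVar vH v0 * gauss s m (vH + v0)) +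
        (1 - h) * (gaussPosteriorVar vL v0 * gauss s m (vL + v0)) ≤
      ∫ x, (x - a) ^ 2 * mixDens h vH vL s x ∂gaussianReal m v0.toNNReal := by
  have hint : ∀ v : ℝ, 0 < v →
      Integrable (fun x => (x - a) ^ 2 * gauss s x v) (gaussianReal m v0.toNNReal) := by
    intro v hv
    refine (integrable_sub_pow_gaussianReal m v0.toNNReal a 2).mul_bdd (c := (√(2 * π * v))⁻¹)
      ?_ (ae_of_all _ fun x => ?_)
    · unfold gauss
      fun_prop
    · rw [Real.norm_of_nonneg (gauss_nonneg s x v)]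
      exact gauss_le hv.le s x
  have hsplit : ∫ x, (x - a) ^ 2 * mixDens h vH vL s x ∂gaussianReal m v0.toNNReal =
      h * ∫ x, (x - a) ^ 2 * gauss s x vH ∂gaussianReal m v0.toNNReal +
        (1 - h) * ∫ x, (x - a) ^ 2 * gauss s x vL ∂gaussianReal m v0.toNNReal := by
    rw [← integral_const_mul, ← integral_const_mul,
      ← integral_add ((hint vH hvH).const_mul h) ((hint vL hvL).const_mul (1 - h))]
    refine integral_congr_ae (ae_of_all _ fun x => ?_)
    simp only [mixDens]
    ring
  rw [hsplit]
  have : 0 ≤ 1 - h := sub_nonneg.2 hh1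
  gcongr
  · exact gaussPosteriorVar_mul_le_integral hvH hv0 s m a
  · exact gaussPosteriorVar_mul_le_integral hvL hv0 s m a

/-- Being told the type of the source can only help the agent. -/
lemma convexComb_gaussPosteriorVar_le_lossUncens (hh0 : 0 ≤ h) (hh1 : h ≤ 1) (hvH : 0 < vH)
    (hvL : 0 < vL) (hv0 : 0 < v0) (ω0 : ℝ) :
    h * gaussPosteriorVar vH v0 + (1 - h) * gaussPosteriorVar vL v0 ≤
      lossUncens h vH vL ω0 v0 := by
  have hlik := isLikelihood_mixDens hh0 hh1 hvH hvL
  have hprior : MemLp id 2 (gaussianReal ω0 v0.toNNReal) := memLp_id_gaussianReal 2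
  have hrisk := hlik.hasFiniteRisk_posteriorMean hprior
    (hlik.hasFiniteRisk_of_bounded hprior (measurable_const (a := (0 : ℝ)))
      (ae_of_all _ fun _ => abs_zero.le))
  have hgauss : ∀ v : ℝ, 0 < v → Integrable (fun s => gauss s ω0 (v + v0)) ∧
      ∫ s, gauss s ω0 (v + v0) = 1 := fun v hv =>
    have hmarg := isLikelihood_gauss (add_pos hv hv0)
    ⟨hmarg.integrable ω0, hmarg.integral_eq_one ω0⟩
  have hH := ((hgauss vH hvH).1.const_mul (gaussPosteriorVar vH v0)).const_mul h
  have hL := ((hgauss vL hvL).1.const_mul (gaussPosteriorVar vL v0)).const_mul (1 - h)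
  calc h * gaussPosteriorVar vH v0 + (1 - h) * gaussPosteriorVar vL v0
      = ∫ s, (h * (gaussPosteriorVar vH v0 * gauss s ω0 (vH + v0)) +
          (1 - h) * (gaussPosteriorVar vL v0 * gauss s ω0 (vL + v0))) := by
        rw [integral_add hH hL]
        simp only [integral_const_mul, (hgauss vH hvH).2, (hgauss vL hvL).2, mul_one]
    _ ≤ _ := hrisk.integral_le_quadraticRisk (hH.add hL) fun s =>
        convexComb_gaussPosteriorVar_mul_le_integral hh0 hh1 hvH hvL hv0 s ω0 _
    _ = lossUncens h vH vL ω0 v0 := (lossUncens_eq_quadraticRisk hv0 ω0).symm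

end Uncensored

section Censored

variable {h vH vL ω0 r k x : ℝ}

lemma winProb_pos (hh0 : 0 < h) (hh1 : h ≤ 1) (hvH : 0 < vH) (hvL : 0 < vL) (hr : 0 < r)
    (ω0 x : ℝ) : 0 < winProb h vH vL ω0 r x := by
  have hpos : ∀ s, 0 < mixDens h vH vL s x := fun s =>
    add_pos_of_pos_of_nonneg (mul_pos hh0 (gauss_pos hvH s x))
      (mul_nonneg (sub_nonneg.2 hh1) (gauss_nonneg s x vL))
  have hint := (isLikelihood_mixDens hh0.le hh1 hvH hvL).integrable x
  rw [winProb, integral_Icc_eq_integral_Ioc, ← intervalIntegral.integral_of_le (by linarith)]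
  exact intervalIntegral.intervalIntegral_pos_of_pos hint.intervalIntegrable hpos (by linarith)

lemma mul_le_winProb (hh0 : 0 ≤ h) (hh1 : h ≤ 1) (hvH : 0 < vH) (hvL : 0 < vL) (hr : 0 < r)
    (hx : |x - ω0| ≤ r / 2) : h * (1 - 4 * vH / r ^ 2) ≤ winProb h vH vL ω0 r x := by
  obtain ⟨hxl, hxu⟩ := abs_le.1 hx
  calc h * (1 - 4 * vH / r ^ 2) = h * (1 - vH / (r / 2) ^ 2) := by
        rw [div_pow, div_div_eq_mul_div]
        norm_num [mul_comm]
    _ ≤ h * ∫ t in Set.Icc (ω0 - r) (ω0 + r), gauss t x vH := by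
        gcongr
        exact one_sub_le_setIntegral_gauss_Icc hvH (half_pos hr) (by linarith) (by linarith)
    _ ≤ winProb h vH vL ω0 r x := by
        rw [winProb, ← integral_const_mul]
        refine integral_mono (((isLikelihood_gauss hvH).integrable x).const_mul h).integrableOn
          ((isLikelihood_mixDens hh0 hh1 hvH hvL).integrable x).integrableOn fun t => ?_
        exact le_add_of_nonneg_right (mul_nonneg (sub_nonneg.2 hh1) (gauss_nonneg t x vL))

/-- The decision rule that moves the prior mean `ω0` a fraction `k` of the way to the signal `s`.
For the optimal `k` it is the posterior mean when all sources are of high quality. -/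
noncomputable def linearRule (ω0 k s : ℝ) : ℝ := ω0 + k * (s - ω0)

lemma continuous_linearRule : Continuous (linearRule ω0 k) := by
  unfold linearRule
  fun_prop

lemma abs_mul_sub_le (hk0 : 0 ≤ k) (hk1 : k ≤ 1) {s : ℝ}
    (hs : s ∈ Set.Icc (ω0 - r) (ω0 + r)) : |k * (s - ω0)| ≤ r := by
  have hsr : |s - ω0| ≤ r := abs_sub_le_iff.2 ⟨by linarith [hs.2], by linarith [hs.1]⟩
  rw [abs_mul, abs_of_nonneg hk0]
  exact (mul_le_of_le_one_left (abs_nonneg _) hk1).trans hsr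

lemma sq_sub_linearRule_le (hk0 : 0 ≤ k) (hk1 : k ≤ 1) {s : ℝ}
    (hs : s ∈ Set.Icc (ω0 - r) (ω0 + r)) (x : ℝ) :
    (x - linearRule ω0 k s) ^ 2 ≤ 2 * (x - ω0) ^ 2 + 2 * r ^ 2 := by
  have hsq : (k * (s - ω0)) ^ 2 ≤ r ^ 2 :=
    sq_le_sq.2 ((abs_mul_sub_le hk0 hk1 hs).trans (le_abs_self r))
  unfold linearRule
  linarith [sq_nonneg (x - ω0 + k * (s - ω0))]

lemma integral_sq_sub_linearRule_mul_gauss {v : ℝ} (hv : 0 < v) (ω0 k x : ℝ) :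
    ∫ s, (x - linearRule ω0 k s) ^ 2 * gauss s x v = (1 - k) ^ 2 * (x - ω0) ^ 2 + k ^ 2 * v := by
  rw [integral_mul_gauss hv]
  have haffine : ∀ s, x - linearRule ω0 k s = -k * s + (x - ω0 + k * ω0) := fun s => by
    unfold linearRule
    ring
  simp only [haffine]
  rw [integral_affine_sq_gaussianReal, Real.coe_toNNReal v hv.le]
  ring

lemma integrable_sq_sub_linearRule_mul_gauss {v : ℝ} (hv : 0 < v) (hk : 0 < k) (ω0 x : ℝ) :
    Integrable (fun s => (x - linearRule ω0 k s) ^ 2 * gauss s x v) := by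
  refine .of_integral_ne_zero ?_
  rw [integral_sq_sub_linearRule_mul_gauss hv]
  positivity

lemma sq_sub_linearRule_mul_mixDens_le (hh0 : 0 ≤ h) (hh1 : h ≤ 1) (hvL : 0 ≤ vL)
    (hk0 : 0 ≤ k) (hk1 : k ≤ 1) (hx : |x - ω0| ≤ r / 2) {s : ℝ}
    (hs : s ∈ Set.Icc (ω0 - r) (ω0 + r)) :
    (x - linearRule ω0 k s) ^ 2 * mixDens h vH vL s x ≤
      h * ((x - linearRule ω0 k s) ^ 2 * gauss s x vH) + 3 * r ^ 2 * (√(2 * π * vL))⁻¹ := by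
  have hbound : (x - linearRule ω0 k s) ^ 2 ≤ 3 * r ^ 2 := by
    have hxsq : (x - ω0) ^ 2 ≤ (r / 2) ^ 2 := sq_le_sq.2 (hx.trans (le_abs_self _))
    nlinarith [sq_sub_linearRule_le hk0 hk1 hs x]
  have hlow : (1 - h) * gauss s x vL ≤ (√(2 * π * vL))⁻¹ :=
    (mul_le_of_le_one_left (gauss_nonneg s x vL) (by linarith)).trans (gauss_le hvL s x)
  have hprod := mul_le_mul hbound hlow
    (mul_nonneg (sub_nonneg.2 hh1) (gauss_nonneg s x vL)) (by positivity)
  unfold mixDens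
  linarith

/-- For states near the prior mean only high-quality sources matter: the density of low-quality
signals is uniformly small, and the window is bounded. -/
lemma setIntegral_sq_sub_linearRule_mul_mixDens_le (hh0 : 0 ≤ h) (hh1 : h ≤ 1) (hvH : 0 < vH)
    (hvL : 0 < vL) (hr : 0 < r) (hk0 : 0 < k) (hk1 : k ≤ 1) (hx : |x - ω0| ≤ r / 2) :
    ∫ s in Set.Icc (ω0 - r) (ω0 + r), (x - linearRule ω0 k s) ^ 2 * mixDens h vH vL s x ≤
      h * ((1 - k) ^ 2 * (x - ω0) ^ 2 + k ^ 2 * vH) + 6 * r ^ 3 * (√(2 * π * vL))⁻¹ := by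
  set W := Set.Icc (ω0 - r) (ω0 + r)
  set N := (√(2 * π * vL))⁻¹
  have hlik := isLikelihood_mixDens hh0 hh1 hvH hvL
  have hH := (integrable_sq_sub_linearRule_mul_gauss hvH hk0 ω0 x).const_mul h
  have hconst : IntegrableOn (fun _ : ℝ => 3 * r ^ 2 * N) W :=
    integrableOn_const measure_Icc_lt_top.ne
  have hsum : IntegrableOn
      (fun s => h * ((x - linearRule ω0 k s) ^ 2 * gauss s x vH) + 3 * r ^ 2 * N) W :=
    hH.integrableOn.add hconst
  calc ∫ s in W, (x - linearRule ω0 k s) ^ 2 * mixDens h vH vL s x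
      ≤ ∫ s in W, (h * ((x - linearRule ω0 k s) ^ 2 * gauss s x vH) + 3 * r ^ 2 * N) :=
        integral_mono_of_nonneg
          (ae_of_all _ fun s => mul_nonneg (sq_nonneg _) (hlik.nonneg s x)) hsum
          (ae_restrict_of_forall_mem measurableSet_Icc fun s hs =>
            sq_sub_linearRule_mul_mixDens_le hh0 hh1 hvL.le hk0.le hk1 hx hs)
    _ = (∫ s in W, h * ((x - linearRule ω0 k s) ^ 2 * gauss s x vH)) + 6 * r ^ 3 * N := by
        rw [integral_add hH.integrableOn hconst, setIntegral_const, Real.volume_real_Icc_of_le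
          (by linarith), smul_eq_mul]
        ring
    _ ≤ (∫ s, h * ((x - linearRule ω0 k s) ^ 2 * gauss s x vH)) + 6 * r ^ 3 * N := by
        refine add_le_add_left (setIntegral_le_integral hH (ae_of_all _ fun s => ?_)) _
        exact mul_nonneg hh0 (mul_nonneg (sq_nonneg _) (gauss_nonneg s x vH))
    _ = _ := by rw [integral_const_mul, integral_sq_sub_linearRule_mul_gauss hvH]

lemma integral_sq_sub_linearRule_mul_censoredLikelihood_le (hh0 : 0 < h) (hh1 : h ≤ 1)
    (hvH : 0 < vH) (hvL : 0 < vL) (hr : 0 < r) (hvr : 4 * vH / r ^ 2 < 1) (hk0 : 0 < k)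
    (hk1 : k ≤ 1) (x : ℝ) :
    ∫ s in Set.Icc (ω0 - r) (ω0 + r), (x - linearRule ω0 k s) ^ 2 *
        censoredLikelihood volume (Set.Icc (ω0 - r) (ω0 + r)) (mixDens h vH vL) s x ≤
      (h * ((1 - k) ^ 2 * (x - ω0) ^ 2 + k ^ 2 * vH) + 6 * r ^ 3 * (√(2 * π * vL))⁻¹) /
          (h * (1 - 4 * vH / r ^ 2)) + 40 / r ^ 2 * (x - ω0) ^ 4 := by
  have : 0 < 1 - 4 * vH / r ^ 2 := sub_pos.2 hvr
  rcases le_or_gt |x - ω0| (r / 2) with hnear | hfar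
  · refine le_add_of_le_of_nonneg ?_ (by positivity)
    simp only [censoredLikelihood, ← mul_div_assoc]
    rw [integral_div]
    exact div_le_div₀ (by positivity)
      (setIntegral_sq_sub_linearRule_mul_mixDens_le hh0.le hh1 hvH hvL hr hk0 hk1 hnear)
      (by positivity) (mul_le_winProb hh0.le hh1 hvH hvL hr hnear)
  · refine le_add_of_nonneg_of_le (by positivity) ?_
    have hlik := (isLikelihood_mixDens hh0.le hh1 hvH hvL).censored
      (winProb_pos hh0 hh1 hvH hvL hr ω0)
    refine hlik.integral_mul_le (fun s => sq_nonneg _)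
      (ae_restrict_of_forall_mem measurableSet_Icc fun s hs => ?_) x
    have hxsq : r ^ 2 ≤ 4 * (x - ω0) ^ 2 := by
      rw [← sq_abs (x - ω0)]
      nlinarith
    calc (x - linearRule ω0 k s) ^ 2 ≤ 2 * (x - ω0) ^ 2 + 2 * r ^ 2 :=
          sq_sub_linearRule_le hk0.le hk1 hs x
      _ ≤ 10 * (x - ω0) ^ 2 := by linarith
      _ ≤ 40 / r ^ 2 * (x - ω0) ^ 4 := by
          rw [div_mul_eq_mul_div, le_div_iff₀ (by positivity)]
          nlinarith [mul_nonneg (sq_nonneg (x - ω0)) (sub_nonneg.2 hxsq)]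

lemma lossCens_le {v0 : ℝ} (hh0 : 0 < h) (hh1 : h ≤ 1) (hvH : 0 < vH) (hvL : 0 < vL)
    (hv0 : 0 < v0) (hr : 0 < r) (hvr : 4 * vH / r ^ 2 < 1) (ω0 : ℝ) :
    lossCens h vH vL ω0 v0 r ≤
      (h * gaussPosteriorVar vH v0 + 6 * r ^ 3 * (√(2 * π * vL))⁻¹) /
          (h * (1 - 4 * vH / r ^ 2)) +
        40 / r ^ 2 * ∫ x, (x - ω0) ^ 4 ∂gaussianReal ω0 v0.toNNReal := by
  set D := h * (1 - 4 * vH / r ^ 2)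
  set E := 6 * r ^ 3 * (√(2 * π * vL))⁻¹
  set k := v0 / (vH + v0)
  have hk0 : 0 < k := by positivity
  have hk1 : k ≤ 1 := (div_le_one (by positivity)).2 (by linarith)
  have hlik := (isLikelihood_mixDens hh0.le hh1 hvH hvL).censored
    (winProb_pos hh0 hh1 hvH hvL hr ω0)
  have hprior : MemLp id 2 (gaussianReal ω0 v0.toNNReal) := memLp_id_gaussianReal 2
  have hrule : ∀ᵐ s ∂volume.restrict (Set.Icc (ω0 - r) (ω0 + r)),
      |linearRule ω0 k s| ≤ |ω0| + r :=
    ae_restrict_of_forall_mem measurableSet_Icc fun s hs =>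
      (abs_add_le _ _).trans (add_le_add_right (abs_mul_sub_le hk0.le hk1 hs) _)
  rw [lossCens_eq_quadraticRisk hv0]
  calc _ ≤ quadraticRisk _ _ _ (linearRule ω0 k) := hlik.quadraticRisk_posteriorMean_le hprior
        (hlik.hasFiniteRisk_of_bounded hprior continuous_linearRule.measurable hrule)
    _ ≤ ∫ x, (h * (1 - k) ^ 2 / D * (x - ω0) ^ 2 + (h * (k ^ 2 * vH) + E) / D +
          40 / r ^ 2 * (x - ω0) ^ 4) ∂gaussianReal ω0 v0.toNNReal := by
        refine quadraticRisk_le_integral hlik.nonneg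
          (integrable_biquadratic_gaussianReal _ _ _ _ _) fun x =>
            (integral_sq_sub_linearRule_mul_censoredLikelihood_le hh0 hh1 hvH hvL hr hvr hk0 hk1
              x).trans_eq ?_
        ring
    _ = _ := by
        rw [integral_biquadratic_gaussianReal, Real.coe_toNNReal v0 hv0.le,
          ← sq_mul_add_sq_mul_eq_gaussPosteriorVar hvH hv0]
        ring

end Censored

section Threshold

variable {h vH v0 : ℝ}

lemma tendsto_inv_sqrt_const_mul_atTop {c : ℝ} (hc : 0 < c) :
    Tendsto (fun v => (√(c * v))⁻¹) atTop (nhds 0) :=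
  tendsto_inv_atTop_zero.comp (tendsto_sqrt_atTop.comp (tendsto_id.const_mul_atTop hc))

lemma exists_radius_lt (hh0 : h ≠ 0) {a b c V T : ℝ} (hVT : V < T) :
    ∃ r : ℝ, 0 < r ∧ a / r ^ 2 < 1 ∧ h * V / (h * (1 - a / r ^ 2)) + b / r ^ 2 * c < T := by
  have hsq : Tendsto (fun r : ℝ => r ^ 2) atTop atTop := tendsto_pow_atTop two_ne_zero
  have hdefect : Tendsto (fun r : ℝ => a / r ^ 2) atTop (nhds 0) := hsq.const_div_atTop a
  have hbound : Tendsto (fun r : ℝ => h * V / (h * (1 - a / r ^ 2)) + b / r ^ 2 * c) atTop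
      (nhds V) := by
    have hden : Tendsto (fun r : ℝ => h * (1 - a / r ^ 2)) atTop (nhds h) := by
      simpa only [sub_zero, mul_one] using (hdefect.const_sub 1).const_mul h
    have hquot : Tendsto (fun r : ℝ => h * V / (h * (1 - a / r ^ 2))) atTop
        (nhds (h * V / h)) := tendsto_const_nhds.div hden hh0
    rw [mul_div_cancel_left₀ V hh0] at hquot
    simpa only [zero_mul, add_zero] using hquot.add ((hsq.const_div_atTop b).mul_const c)
  obtain ⟨r, hr, hlt, hT⟩ := ((eventually_gt_atTop 0).and
    ((hdefect.eventually_lt_const one_pos).and (hbound.eventually_lt_const hVT))).exists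
  exact ⟨r, hr, hlt, hT⟩

lemma exists_radius_eventually_lossCens_lt (hh0 : 0 < h) (hh1 : h ≤ 1) (hvH : 0 < vH)
    (hv0 : 0 < v0) (ω0 : ℝ) {T : ℝ} (hT : gaussPosteriorVar vH v0 < T) :
    ∃ r, 0 < r ∧ ∀ᶠ vL in atTop, lossCens h vH vL ω0 v0 r < T := by
  obtain ⟨r, hr, hvr, hrT⟩ := exists_radius_lt (a := 4 * vH) (b := 40)
    (c := ∫ x, (x - ω0) ^ 4 ∂gaussianReal ω0 v0.toNNReal) hh0.ne' hT
  have hlim := ((((tendsto_inv_sqrt_const_mul_atTop two_pi_pos).const_mul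
    (6 * r ^ 3)).const_add (h * gaussPosteriorVar vH v0)).div_const
      (h * (1 - 4 * vH / r ^ 2))).add_const
        (40 / r ^ 2 * ∫ x, (x - ω0) ^ 4 ∂gaussianReal ω0 v0.toNNReal)
  rw [mul_zero, add_zero] at hlim
  refine ⟨r, hr, ?_⟩
  filter_upwards [hlim.eventually_lt_const hrT, eventually_gt_atTop 0] with vL hvLT hvL
  exact (lossCens_le hh0 hh1 hvH hvL hv0 hr hvr ω0).trans_lt hvLT

end Threshold

/-- Proposition 2 (`prop:finiter`): there is a threshold `ν* > σH²` such that whenever the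
low-type signal variance is at least `ν*`, some finite censoring radius strictly beats the
uncensored strategy. -/
theorem stmt_3 (ω0 v0 vH h : ℝ) (hv0 : 0 < v0) (hvH : 0 < vH)
    (hh0 : 0 < h) (hh1 : h < 1) :
    ∃ ν : ℝ, vH < ν ∧ ∀ vL : ℝ, ν ≤ vL →
      ∃ r : ℝ, 0 < r ∧ lossCens h vH vL ω0 v0 r < lossUncens h vH vL ω0 v0 := by
  have hvH1 : 0 < vH + 1 := by linarith
  have h1h : 0 < 1 - h := sub_pos.2 hh1
  have hmono := gaussPosteriorVar_strictMonoOn hv0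
  have hV : gaussPosteriorVar vH v0 < gaussPosteriorVar (vH + 1) v0 :=
    hmono hvH hvH1 (lt_add_one vH)
  set T := h * gaussPosteriorVar vH v0 + (1 - h) * gaussPosteriorVar (vH + 1) v0
  have hT : gaussPosteriorVar vH v0 < T := by linarith [mul_lt_mul_of_pos_left hV h1h]
  have hTle : ∀ vL, vH + 1 ≤ vL → T ≤ lossUncens h vH vL ω0 v0 := fun vL hvL => by
    have hvL0 : 0 < vL := hvH1.trans_le hvL
    have hVL := mul_le_mul_of_nonneg_left (hmono.monotoneOn hvH1 hvL0 hvL) h1h.le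
    exact (add_le_add_right hVL _).trans
      (convexComb_gaussPosteriorVar_le_lossUncens hh0.le hh1.le hvH hvL0 hv0 ω0)
  obtain ⟨r, hr, hlt⟩ := exists_radius_eventually_lossCens_lt hh0 hh1.le hvH hv0 ω0 hT
  obtain ⟨ν, hν⟩ := eventually_atTop.1 hlt
  refine ⟨max ν (vH + 1), (lt_add_one vH).trans_le (le_max_right _ _), fun vL hvL => ⟨r, hr, ?_⟩⟩
  exact (hν vL ((le_max_left _ _).trans hvL)).trans_le (hTle vL ((le_max_right _ _).trans hvL))
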